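/- Gaifman's Locality Theorem: for every relational vocabulary ρ, every first-order formula φ(x̄) over ρ is logically equivalent to a Boolean combination of basic local sentences and local formulas with free variables among x̄. -/

import Mathlib

open FirstOrder FirstOrder.Language

universe w

/-- The quantifier rank of a first-order (bounded) formula: the nesting depth of quantifiers. -/
def qRank {L : FirstOrder.Language} : ∀ {α : Type*} {n : ℕ}, L.BoundedFormula α n → ℕ
  | _, _, .falsum => 0
  | _, _, .equal _ _ => 0
  | _, _, .rel _ _ => 0
  | _, _, .imp f g => max (qRank f) (qRank g)
  | _, _, .all f => qRank f + 1

/-- Adjacency in the Gaifman graph of a structure: two distinct elements are adjacent iff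
they occur together in some tuple of some relation. -/
def gaifmanAdj (L : FirstOrder.Language) (M : Type w) [L.Structure M] (a b : M) : Prop :=
  a ≠ b ∧ ∃ (n : ℕ) (R : L.Relations n) (t : Fin n → M),
    Structure.RelMap R t ∧ (∃ i, t i = a) ∧ (∃ j, t j = b)

/-- `distLE L M r a b` means the distance between `a` and `b` in the Gaifman graph of `M`
is at most `r`. -/
def distLE (L : FirstOrder.Language) (M : Type w) [L.Structure M] : ℕ → M → M → Prop
  | 0, a, b => a = b
  | r + 1, a, b => a = b ∨ ∃ c, gaifmanAdj L M a c ∧ distLE L M r c b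

theorem distLE_self (L : FirstOrder.Language) (M : Type w) [L.Structure M] (r : ℕ) (a : M) :
    distLE L M r a a := by
  cases r with
  | zero => rfl
  | succ r => exact Or.inl rfl

/-- The `r`-neighbourhood of a tuple: all elements at Gaifman distance at most `r`
from some component of the tuple. -/
def nbhd (L : FirstOrder.Language) (M : Type w) [L.Structure M] (r : ℕ) {k : ℕ}
    (u : Fin k → M) : Set M :=
  {b | ∃ i, distLE L M r (u i) b}

/-- `IsDistFormula L r d` says that the formula `d`, with two free variables, expresses
that the Gaifman distance between its two arguments is at most `r` (this is the property
of the formula `δ_{≤r}`). -/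
def IsDistFormula.{v} (L : FirstOrder.Language) (r : ℕ) (d : L.Formula (Fin 2)) : Prop :=
  ∀ (M : Type v) [L.Structure M], ∀ a b : M, d.Realize ![a, b] ↔ distLE L M r a b

/-- The radius-`r` relativisation of a formula with free variables `x_0, …, x_{k-1}`,
relative to a formula `d = δ_{≤r}` expressing distance at most `r`: every (universal)
quantifier `∀ y ψ` is replaced by `∀ y (⋁_i δ_{≤r}(x_i, y) → ψ)` (and consequently every
existential quantifier `∃ y ψ` by `∃ y (⋁_i δ_{≤r}(x_i, y) ∧ ψ)`). -/
def relativize {L : FirstOrder.Language} (d : L.Formula (Fin 2)) :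
    ∀ {k n : ℕ}, L.BoundedFormula (Fin k) n → L.BoundedFormula (Fin k) n
  | _, _, .falsum => .falsum
  | _, _, .equal t₁ t₂ => .equal t₁ t₂
  | _, _, .rel R ts => .rel R ts
  | _, _, .imp f g => (relativize d f).imp (relativize d g)
  | k, n, .all f =>
      ((((List.finRange k).map fun i =>
          BoundedFormula.relabel (![Sum.inl i, Sum.inr (Fin.last n)] : Fin 2 → (Fin k) ⊕ (Fin (n + 1))) d).foldr
            (· ⊔ ·) ⊥).imp (relativize d f)).all

/-- A formula is syntactically `r`-local (w.r.t. the distance formula `d = δ_{≤r}`) if it is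
the radius-`r` relativisation of some formula. -/
def SynLocal {L : FirstOrder.Language} (d : L.Formula (Fin 2)) {k : ℕ}
    (φ : L.Formula (Fin k)) : Prop :=
  ∃ ψ : L.Formula (Fin k), φ = relativize d ψ

/-- The local `(q, r)`-type of a tuple `u` in `M`: the set of syntactically `r`-local formulas
(w.r.t. the distance formula `d = δ_{≤r}`) of quantifier rank at most `q` satisfied by `u`. -/
def ltp {L : FirstOrder.Language} (d : L.Formula (Fin 2)) (q : ℕ) (M : Type w) [L.Structure M]
    {k : ℕ} (u : Fin k → M) : Set (L.Formula (Fin k)) :=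
  {φ | SynLocal d φ ∧ qRank φ ≤ q ∧ φ.Realize u}

/-- The first-order `q`-type of a tuple `u` in `M`: the set of formulas of quantifier rank
at most `q` (with free variables among `x_0, …, x_{k-1}`) satisfied by `u`. -/
def ftp {L : FirstOrder.Language} (q : ℕ) (M : Type w) [L.Structure M]
    {k : ℕ} (u : Fin k → M) : Set (L.Formula (Fin k)) :=
  {φ | qRank φ ≤ q ∧ φ.Realize u}

/-- The union of two disjoint structures (realized as a structure on the sum type):
a relation holds of a tuple iff the tuple lies entirely in one part and the relation
holds there. -/
def sumStructure (L : FirstOrder.Language) [L.IsRelational] (M N : Type w)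
    [L.Structure M] [L.Structure N] : L.Structure (M ⊕ N) where
  funMap f _ := isEmptyElim f
  RelMap R t :=
    (∃ s, t = Sum.inl ∘ s ∧ Structure.RelMap R s) ∨
    (∃ s, t = Sum.inr ∘ s ∧ Structure.RelMap R s)

/-- The substructure of `M` induced on a subset `S`. -/
def inducedStructure (L : FirstOrder.Language) [L.IsRelational] {M : Type w} [L.Structure M]
    (S : Set M) : L.Structure S where
  funMap f _ := isEmptyElim f
  RelMap R t := Structure.RelMap R fun i => (t i : M)

/-- A formula `φ(x_1, …, x_k)` is `r`-local if for every structure `M` and every tuple `u`,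
`M ⊨ φ(u)` iff the substructure induced on the `r`-neighbourhood of `u` satisfies `φ(u)`. -/
def RLocal.{v} (L : FirstOrder.Language) [L.IsRelational] (r : ℕ) {k : ℕ}
    (φ : L.Formula (Fin k)) : Prop :=
  ∀ (M : Type v) [L.Structure M] (u : Fin k → M),
    φ.Realize u ↔
      (letI := inducedStructure L (nbhd L M r u)
       Formula.Realize (M := nbhd L M r u) φ
         (fun i => ⟨u i, i, distLE_self L M r (u i)⟩))


/-- Boolean combinations of a set of formulas: the closure of the set under the Boolean
connectives (from `⊥` and `imp` all other Boolean connectives are definable). -/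
inductive BoolComb {L : FirstOrder.Language} {k : ℕ} (S : Set (L.Formula (Fin k))) :
    L.Formula (Fin k) → Prop
  | base {φ} : φ ∈ S → BoolComb S φ
  | falsum : BoolComb S ⊥
  | imp {φ ψ} : BoolComb S φ → BoolComb S ψ → BoolComb S (φ.imp ψ)

/-- The basic local sentence `∃ x₁ … x_kk (⋀_{i < j} δ_{>2r}(x_i, x_j) ∧ ⋀_i ψ(x_i))` of
radius `r`, regarded as a formula with (unused) free variables among `x_1, …, x_k`.
Here `d (2*r)` is the formula `δ_{≤2r}`. -/
def basicLocalSentence {L : FirstOrder.Language} (d : ℕ → L.Formula (Fin 2)) (r kk : ℕ)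
    (ψ : L.Formula (Fin 1)) (k : ℕ) : L.Formula (Fin k) :=
  BoundedFormula.exs
    (((((List.finRange kk).product (List.finRange kk)).filter fun p => p.1 < p.2).map
        (fun p => (BoundedFormula.relabel
            (![Sum.inr p.1, Sum.inr p.2] : Fin 2 → (Fin k) ⊕ (Fin kk)) (d (2 * r))).not) ++
      (List.finRange kk).map fun i =>
        BoundedFormula.relabel ((fun _ => Sum.inr i) : Fin 1 → (Fin k) ⊕ (Fin kk)) ψ).foldr
      (· ⊓ ·) ⊤)

/-! A formula is treated as the query it defines, evaluated in the substructures induced on subsets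
of a fixed structure, and every definable query is shown to be equivalent to a decision tree that
branches on basic local sentences and has local leaves. Existential quantifiers commute with
branching, so only `∃ y` in front of an `r`-local leaf `Q(x̄, y)` has to be eliminated. If `y` is
within `2r + 1` of `x̄`, then `∃ y` is itself local, of a larger radius. Otherwise the
`r`-neighbourhood of `x̄, y` is the disjoint union of those of `x̄` and of `y`, and the
Feferman–Vaught argument splits `Q` into finitely many conjunctions of a local property of `x̄`
and a local property `β` of `y`. It remains to decide whether `β` holds somewhere far from `x̄`,
which is done by comparing the sizes of scattered sets of `β`-points in the whole structure (basic
local sentences) with the sizes of those near `x̄` (a local property). -/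

section GaifmanGraph

theorem edist_le_succ_iff {V : Type*} (G : SimpleGraph V) {r : ℕ} {a b : V} :
    G.edist a b ≤ (r + 1 : ℕ) ↔ a = b ∨ ∃ c, G.Adj a c ∧ G.edist c b ≤ r := by
  constructor
  · intro h
    obtain ⟨p, hp⟩ := G.exists_walk_of_edist_ne_top (h.trans_lt (ENat.natCast_lt_top _)).ne
    rw [← hp] at h
    cases p with
    | nil => exact Or.inl rfl
    | cons hac q =>
      rw [SimpleGraph.Walk.length_cons, Nat.cast_le, Nat.add_le_add_iff_right] at h
      exact Or.inr ⟨_, hac, q.edist_le.trans (Nat.cast_le.2 h)⟩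
  · rintro (rfl | ⟨c, hac, hcb⟩)
    · simp
    · calc G.edist a b ≤ G.edist a c + G.edist c b := SimpleGraph.edist_triangle
        _ ≤ 1 + r := add_le_add (SimpleGraph.edist_eq_one_iff_adj.2 hac).le hcb
        _ = (r + 1 : ℕ) := by push_cast; exact add_comm _ _

theorem edist_le_of_add_le {V : Type*} {G : SimpleGraph V} {r s t : ℕ} {a b c : V}
    (hab : G.edist a b ≤ r) (hbc : G.edist b c ≤ s) (hrst : r + s ≤ t) : G.edist a c ≤ t :=
  calc G.edist a c ≤ G.edist a b + G.edist b c := SimpleGraph.edist_triangle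
    _ ≤ r + s := add_le_add hab hbc
    _ ≤ t := by exact_mod_cast hrst

variable (L : FirstOrder.Language) {M N : Type*} [L.Structure M] [L.Structure N]

/-- The Gaifman graph of the substructure induced on `S`, as a graph on the ambient structure `M`:
all substructures of `M` thus have their distances measured on the same type. -/
def gaifmanGraph (S : Set M) : SimpleGraph M where
  Adj a b := a ≠ b ∧ ∃ (n : ℕ) (R : L.Relations n) (t : Fin n → M),
    Structure.RelMap R t ∧ (∀ i, t i ∈ S) ∧ (∃ i, t i = a) ∧ ∃ j, t j = b
  symm := ⟨fun _ _ ⟨hab, n, R, t, hR, ht, ha, hb⟩ => ⟨hab.symm, n, R, t, hR, ht, hb, ha⟩⟩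
  loopless := ⟨fun _ h => h.1 rfl⟩

variable {L}

theorem gaifmanGraph_mono {S T : Set M} (hTS : T ⊆ S) : gaifmanGraph L T ≤ gaifmanGraph L S :=
  fun _ _ ⟨hab, n, R, t, hR, ht, h⟩ => ⟨hab, n, R, t, hR, fun i => hTS (ht i), h⟩

theorem edist_gaifmanGraph_le_one {S : Set M} {n : ℕ} {R : L.Relations n} {t : Fin n → M}
    (hR : Structure.RelMap R t) (ht : ∀ i, t i ∈ S) (i j : Fin n) :
    (gaifmanGraph L S).edist (t i) (t j) ≤ 1 := by
  rw [SimpleGraph.edist_le_one_iff_adj_or_eq]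
  exact or_iff_not_imp_right.2 fun hij => ⟨hij, n, R, t, hR, ht, ⟨i, rfl⟩, j, rfl⟩

theorem mem_of_edist_gaifmanGraph_le {S : Set M} {r : ℕ} {a b : M} (ha : a ∈ S)
    (h : (gaifmanGraph L S).edist a b ≤ r) : b ∈ S := by
  cases r with
  | zero => rwa [← SimpleGraph.edist_eq_zero_iff.1 (nonpos_iff_eq_zero.1 h)]
  | succ r =>
    rw [SimpleGraph.edist_comm, edist_le_succ_iff] at h
    obtain rfl | ⟨c, ⟨-, n, R, t, -, ht, ⟨i, rfl⟩, -⟩, -⟩ := h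
    · exact ha
    · exact ht i

theorem edist_gaifmanGraph_le_of_ball_subset {S T : Set M} {r : ℕ} {a b : M}
    (hT : ∀ c, (gaifmanGraph L S).edist a c ≤ r → c ∈ T) (h : (gaifmanGraph L S).edist a b ≤ r) :
    (gaifmanGraph L T).edist a b ≤ r := by
  induction r generalizing a with
  | zero => rwa [Nat.cast_zero, nonpos_iff_eq_zero, SimpleGraph.edist_eq_zero_iff] at h ⊢
  | succ r ih =>
    obtain rfl | ⟨c, hac, hcb⟩ := (edist_le_succ_iff _).1 h
    · simp
    · obtain ⟨hne, n, R, t, hR, ht, ⟨i, rfl⟩, j, rfl⟩ := hac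
      have htT (l) : t l ∈ T :=
        hT _ ((edist_gaifmanGraph_le_one hR ht i l).trans (by norm_cast; omega))
      refine (edist_le_succ_iff _).2 (Or.inr ⟨t j, ⟨hne, n, R, t, hR, htT, ⟨i, rfl⟩, j, rfl⟩, ?_⟩)
      exact ih (fun c hc => hT c (edist_le_of_add_le (mod_cast edist_gaifmanGraph_le_one hR ht i j)
        hc (Nat.add_comm 1 r).le)) hcb

theorem edist_gaifmanGraph_le_iff {S T : Set M} (hTS : T ⊆ S) {r : ℕ} {a : M}
    (hT : ∀ c, (gaifmanGraph L S).edist a c ≤ r → c ∈ T) (b : M) :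
    (gaifmanGraph L S).edist a b ≤ r ↔ (gaifmanGraph L T).edist a b ≤ r :=
  ⟨edist_gaifmanGraph_le_of_ball_subset hT,
    (SimpleGraph.edist_anti (gaifmanGraph_mono hTS)).trans⟩

end GaifmanGraph

section Embedding

variable {L : FirstOrder.Language} {M N : Type w} [L.Structure M] [L.Structure N]

theorem gaifmanGraph_range_adj_iff (e : N ↪[L] M) (a b : N) :
    (gaifmanGraph L (Set.range e)).Adj (e a) (e b) ↔ gaifmanAdj L N a b := by
  refine and_congr e.injective.ne_iff (exists₂_congr fun n R => ⟨?_, ?_⟩)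
  · rintro ⟨t, hR, ht, hi, hj⟩
    choose s hs using ht
    obtain rfl : t = e ∘ s := funext fun i => (hs i).symm
    simp only [Function.comp_apply, e.injective.eq_iff] at hi hj
    exact ⟨s, (e.map_rel R s).1 hR, hi, hj⟩
  · rintro ⟨s, hR, ⟨i, rfl⟩, j, rfl⟩
    exact ⟨e ∘ s, (e.map_rel R s).2 hR, fun i => ⟨s i, rfl⟩, ⟨i, rfl⟩, j, rfl⟩

theorem edist_gaifmanGraph_range_le_iff (e : N ↪[L] M) {r : ℕ} (a b : N) :
    (gaifmanGraph L (Set.range e)).edist (e a) (e b) ≤ r ↔ distLE L N r a b := by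
  induction r generalizing a with
  | zero => simp [distLE, SimpleGraph.edist_eq_zero_iff, e.injective.eq_iff]
  | succ r ih =>
    rw [edist_le_succ_iff, e.injective.eq_iff]
    refine or_congr_right ⟨?_, fun ⟨c, hac, hcb⟩ =>
      ⟨e c, (gaifmanGraph_range_adj_iff e a c).2 hac, (ih c).2 hcb⟩⟩
    rintro ⟨_, hac, hcb⟩
    obtain ⟨c, rfl⟩ := mem_of_edist_gaifmanGraph_le (r := 1) (Set.mem_range_self a)
      (SimpleGraph.edist_eq_one_iff_adj.2 hac).le
    exact ⟨c, (gaifmanGraph_range_adj_iff e a c).1 hac, (ih c).1 hcb⟩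

/-- The inclusion of an induced substructure into the ambient structure. -/
def inducedEmbedding [L.IsRelational] (S : Set M) :
    letI := inducedStructure L S
    S ↪[L] M :=
  letI := inducedStructure L S
  { toFun := Subtype.val
    inj' := Subtype.val_injective
    map_fun' := fun f => isEmptyElim f
    map_rel' := fun _ _ => Iff.rfl }

end Embedding

section Neighbourhood

variable {M V W : Type*} {S T : Set M} {r s : ℕ} {u : V → M} {v : W → M}

theorem elim_mem (hu : ∀ i, u i ∈ S) (hv : ∀ i, v i ∈ S) : ∀ i, Sum.elim u v i ∈ S :=
  Sum.forall.2 ⟨hu, hv⟩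

theorem elim_mem_union (hu : ∀ i, u i ∈ S) (hv : ∀ i, v i ∈ T) : ∀ i, Sum.elim u v i ∈ S ∪ T :=
  Sum.forall.2 ⟨fun i => Or.inl (hu i), fun i => Or.inr (hv i)⟩

variable (L : FirstOrder.Language) [L.Structure M]

/-- The `r`-neighbourhood of a family of elements in the substructure induced on `S`. -/
def nbhdIn (S : Set M) (r : ℕ) (u : V → M) : Set M :=
  {b | ∃ i, (gaifmanGraph L S).edist (u i) b ≤ r}

variable {L}

theorem mem_nbhdIn_self (i : V) : u i ∈ nbhdIn L S r u := ⟨i, by simp⟩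

theorem nbhdIn_subset (hu : ∀ i, u i ∈ S) : nbhdIn L S r u ⊆ S :=
  fun _ ⟨i, h⟩ => mem_of_edist_gaifmanGraph_le (hu i) h

theorem nbhdIn_mono (hrs : r ≤ s) : nbhdIn L S r u ⊆ nbhdIn L S s u :=
  fun _ ⟨i, h⟩ => ⟨i, h.trans (mod_cast hrs)⟩

theorem nbhdIn_elim : nbhdIn L S r (Sum.elim u v) = nbhdIn L S r u ∪ nbhdIn L S r v := by
  ext b
  simp [nbhdIn]

theorem nbhdIn_comp_subset (f : W → V) : nbhdIn L S r (u ∘ f) ⊆ nbhdIn L S r u :=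
  fun _ ⟨i, h⟩ => ⟨f i, h⟩

theorem nbhdIn_subset_nbhdIn_of_forall_mem {R : ℕ} (hv : ∀ i, v i ∈ nbhdIn L S R u)
    (hrs : R + r ≤ s) : nbhdIn L S r v ⊆ nbhdIn L S s u := fun _ ⟨i, h⟩ =>
  let ⟨j, hj⟩ := hv i
  ⟨j, edist_le_of_add_le hj h hrs⟩

theorem nbhdIn_eq_of_subset (hTS : T ⊆ S) (hT : nbhdIn L S r u ⊆ T) :
    nbhdIn L S r u = nbhdIn L T r u :=
  Set.ext fun b => exists_congr fun i =>
    edist_gaifmanGraph_le_iff hTS (fun _ hc => hT ⟨i, hc⟩) b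

end Neighbourhood

section Definability

variable {L : FirstOrder.Language} {V : Type}

/-- A property of families of elements indexed by `V`. It is evaluated in the substructure induced
on a subset of an ambient structure, so that restricting it to a neighbourhood does not change the
type of the elements. -/
abbrev Query (L : FirstOrder.Language) (V : Type) :=
  ∀ (M : Type w) [L.Structure M], Set M → (V → M) → Prop

/-- The formula `ψ` defines the query `Q`. A substructure is presented as the range of an embedding,
which covers both the subsets of `M` and `M` itself. -/
def Expresses (ψ : L.Formula V) (Q : Query.{w} L V) : Prop :=
  ∀ {M N : Type w} [L.Structure M] [L.Structure N] (e : N ↪[L] M) (u : V → N),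
    ψ.Realize u ↔ Q M (Set.range e) (e ∘ u)

theorem Expresses.realize_induced [L.IsRelational] {ψ : L.Formula V} {Q : Query.{w} L V}
    (h : Expresses ψ Q) {M : Type w} [L.Structure M] (S : Set M) (u : V → S) :
    (letI := inducedStructure L S; ψ.Realize u) ↔ Q M S fun i => u i := by
  let := inducedStructure L S
  have hS : Set.range (inducedEmbedding (L := L) S) = S := Subtype.range_coe
  exact (h (inducedEmbedding S) u).trans (by rw [hS]; rfl)

/-- A query is definable if some first-order formula defines it. -/
def Definable (Q : Query.{w} L V) : Prop :=
  ∃ ψ : L.Formula V, Expresses ψ Q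

theorem exists_fin_one_arrow {α : Type*} {p : (Fin 1 → α) → Prop} :
    (∃ y, p y) ↔ ∃ a, p fun _ => a := by
  refine ⟨fun ⟨y, hy⟩ => ⟨y 0, ?_⟩, fun ⟨a, ha⟩ => ⟨_, ha⟩⟩
  rwa [show y = fun _ => y 0 from funext fun i => congrArg y (Subsingleton.elim i 0)] at hy

namespace Definable

variable {W : Type} {P Q : Query.{w} L V}

theorem eq (i j : V) : Definable (fun _ _ _ u => u i = u j : Query.{w} L V) :=
  ⟨Term.equal (Term.var i) (Term.var j), fun e _ => by
    simp only [Formula.realize_equal, Term.realize_var, Function.comp_apply, e.injective.eq_iff]⟩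

theorem rel {n : ℕ} (R : L.Relations n) (g : Fin n → V) :
    Definable (fun _ _ _ u => Structure.RelMap R (u ∘ g) : Query.{w} L V) :=
  ⟨R.formula fun i => Term.var (g i), fun e _ => Formula.realize_rel.trans (e.map_rel R _).symm⟩

theorem falsum : Definable (fun _ _ _ _ => False : Query.{w} L V) := ⟨⊥, fun _ _ => Iff.rfl⟩

theorem imp (hP : Definable P) (hQ : Definable Q) :
    Definable (fun M _ S u => P M S u → Q M S u : Query.{w} L V) := by
  obtain ⟨ψ, hψ⟩ := hP
  obtain ⟨χ, hχ⟩ := hQ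
  exact ⟨ψ.imp χ, fun e u => imp_congr (hψ e u) (hχ e u)⟩

theorem congr (hP : Definable P)
    (h : ∀ (M : Type w) [L.Structure M] (S : Set M) (u : V → M), (∀ i, u i ∈ S) →
      (P M S u ↔ Q M S u)) : Definable Q := by
  obtain ⟨ψ, hψ⟩ := hP
  exact ⟨ψ, fun e u => (hψ e u).trans (h _ _ _ fun i => Set.mem_range_self (u i))⟩

theorem not (hP : Definable P) : Definable (fun M _ S u => ¬ P M S u : Query.{w} L V) :=
  hP.imp falsum

theorem and (hP : Definable P) (hQ : Definable Q) :
    Definable (fun M _ S u => P M S u ∧ Q M S u : Query.{w} L V) := by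
  obtain ⟨ψ, hψ⟩ := hP
  obtain ⟨χ, hχ⟩ := hQ
  exact ⟨ψ ⊓ χ, fun e u => Formula.realize_inf.trans (and_congr (hψ e u) (hχ e u))⟩

theorem comp {Q : Query.{w} L W} (hQ : Definable Q) (f : W → V) :
    Definable (fun M _ S u => Q M S (u ∘ f) : Query.{w} L V) := by
  obtain ⟨ψ, hψ⟩ := hQ
  exact ⟨ψ.relabel f, fun e u => Formula.realize_relabel.trans (hψ e (u ∘ f))⟩

theorem forall_finite {ι : Type*} [Finite ι] {Q : ι → Query.{w} L V} (hQ : ∀ i, Definable (Q i)) :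
    Definable (fun M _ S u => ∀ i, Q i M S u : Query.{w} L V) := by
  choose ψ hψ using hQ
  exact ⟨Formula.iInf ψ, fun e u =>
    Formula.realize_iInf.trans (forall_congr' fun i => hψ i e u)⟩

theorem exists_finite {ι : Type*} [Finite ι] {Q : ι → Query.{w} L V} (hQ : ∀ i, Definable (Q i)) :
    Definable (fun M _ S u => ∃ i, Q i M S u : Query.{w} L V) := by
  choose ψ hψ using hQ
  exact ⟨Formula.iSup ψ, fun e u =>
    Formula.realize_iSup.trans (exists_congr fun i => hψ i e u)⟩

theorem ex_family [Finite W] {Q : Query.{w} L (V ⊕ W)} (hQ : Definable Q) :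
    Definable (fun M _ S u => ∃ y : W → M, (∀ i, y i ∈ S) ∧ Q M S (Sum.elim u y) :
      Query.{w} L V) := by
  obtain ⟨ψ, hψ⟩ := hQ
  refine ⟨ψ.iExs W, fun e u => Formula.realize_iExs.trans ?_⟩
  simp only [hψ e, Sum.comp_elim]
  refine ⟨fun ⟨y, hy⟩ => ⟨e ∘ y, fun i => Set.mem_range_self (y i), hy⟩, fun ⟨y, hy, h⟩ => ?_⟩
  choose x hx using hy
  obtain rfl : e ∘ x = y := funext hx
  exact ⟨x, h⟩

theorem ex {Q : Query.{w} L (V ⊕ Fin 1)} (hQ : Definable Q) :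
    Definable (fun M _ S u => ∃ y ∈ S, Q M S (Sum.elim u fun _ => y) : Query.{w} L V) :=
  hQ.ex_family.congr fun _ _ _ _ _ => exists_fin_one_arrow.trans <|
    exists_congr fun _ => and_congr_left fun _ => forall_const (Fin 1)

theorem all {Q : Query.{w} L (V ⊕ Fin 1)} (hQ : Definable Q) :
    Definable (fun M _ S u => ∀ y ∈ S, Q M S (Sum.elim u fun _ => y) : Query.{w} L V) :=
  hQ.not.ex.not.congr fun M _ S u _ => by push Not; rfl

end Definable

theorem exists_eq_var [L.IsRelational] {α : Type*} (t : L.Term α) : ∃ i, t = Term.var i := by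
  cases t with
  | var i => exact ⟨i, rfl⟩
  | func f _ => exact isEmptyElim f

theorem elim_snoc_eq_elim_comp {α N : Type*} {n : ℕ} {f : α ⊕ Fin n → V} {u : V → N} {v : α → N}
    {xs : Fin n → N} (h : Sum.elim v xs = u ∘ f) (y : N) :
    Sum.elim v (Fin.snoc xs y) = Sum.elim u (fun _ : Fin 1 => y) ∘
      Sum.elim (Sum.inl ∘ f ∘ Sum.inl) (Fin.snoc (Sum.inl ∘ f ∘ Sum.inr) (Sum.inr 0)) := by
  ext (i | i)
  · exact congrFun h (Sum.inl i)
  · cases i using Fin.lastCases with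
    | last => simp
    | cast i => simpa using congrFun h (Sum.inr i)

/-- A bounded formula `φ` whose variables are interpreted through `f` defines the query `Q`. -/
def ExpressesVia {α V : Type} {n : ℕ} (f : α ⊕ Fin n → V) (φ : L.BoundedFormula α n)
    (Q : Query.{w} L V) : Prop :=
  ∀ {M N : Type w} [L.Structure M] [L.Structure N] (e : N ↪[L] M) (u : V → N) (v : α → N)
    (xs : Fin n → N), Sum.elim v xs = u ∘ f → (φ.Realize v xs ↔ Q M (Set.range e) (e ∘ u))

theorem ExpressesVia.expresses {ψ : L.Formula V} {Q : Query.{w} L V}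
    (h : ExpressesVia (Sum.elim id finZeroElim) ψ Q) : Expresses ψ Q :=
  fun e u => h e u u default (by ext (i | i); exacts [rfl, i.elim0])

@[elab_as_elim]
theorem Definable.induction_on [L.IsRelational]
    {C : ∀ (V : Type) (Q : Query.{w} L V), Definable Q → Prop}
    (eq : ∀ (V : Type) (i j : V), C _ _ (.eq i j))
    (rel : ∀ (V : Type) (n : ℕ) (R : L.Relations n) (g : Fin n → V), C _ _ (.rel R g))
    (falsum : ∀ V : Type, C V _ .falsum)
    (imp : ∀ (V : Type) (P Q : Query.{w} L V) (hP : Definable P) (hQ : Definable Q),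
      C _ _ hP → C _ _ hQ → C _ _ (hP.imp hQ))
    (all : ∀ (V : Type) (Q : Query.{w} L (V ⊕ Fin 1)) (hQ : Definable Q), C _ _ hQ → C _ _ hQ.all)
    (congr : ∀ (V : Type) (P Q : Query.{w} L V) (hP : Definable P)
      (h : ∀ (M : Type w) [L.Structure M] (S : Set M) (u : V → M), (∀ i, u i ∈ S) →
        (P M S u ↔ Q M S u)), C _ _ hP → C _ _ (hP.congr h))
    {V : Type} {Q : Query.{w} L V} (hQ : Definable Q) : C V Q hQ := by
  suffices key : ∀ {α : Type} {n : ℕ} (φ : L.BoundedFormula α n) {V : Type} (f : α ⊕ Fin n → V),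
      ∃ (Q : Query.{w} L V) (hQ : Definable Q), C V Q hQ ∧ ExpressesVia f φ Q by
    obtain ⟨ψ, hψ⟩ := id hQ
    obtain ⟨P, hP, hPC, hPψ⟩ := key ψ (Sum.elim id finZeroElim)
    exact congr _ _ _ hP (fun M _ S u hu =>
      (Expresses.realize_induced hPψ.expresses S fun i => ⟨u i, hu i⟩).symm.trans
        (hψ.realize_induced S fun i => ⟨u i, hu i⟩)) hPC
  intro α n φ
  induction φ with
  | falsum => exact fun f => ⟨_, _, falsum _, fun _ _ _ _ _ => Iff.rfl⟩
  | equal t₁ t₂ =>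
    obtain ⟨i, rfl⟩ := exists_eq_var t₁
    obtain ⟨j, rfl⟩ := exists_eq_var t₂
    refine fun f => ⟨_, _, eq _ (f i) (f j), fun e u v xs h => ?_⟩
    simp only [BoundedFormula.Realize, Term.realize_var, h, Function.comp_apply,
      e.injective.eq_iff]
  | rel R ts =>
    choose g hg using fun i => exists_eq_var (ts i)
    refine fun f => ⟨_, _, rel _ _ R (f ∘ g), fun e u v xs h => ?_⟩
    simp only [BoundedFormula.Realize, Term.realize_var, hg, h]
    exact (e.map_rel R _).symm
  | imp _ _ ih ih' =>
    intro V f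
    obtain ⟨P, _, hP, hPψ⟩ := ih f
    obtain ⟨Q, _, hQ, hQψ⟩ := ih' f
    exact ⟨_, _, imp _ _ _ _ _ hP hQ,
      fun e u v xs h => imp_congr (hPψ e u v xs h) (hQψ e u v xs h)⟩
  | all _ ih =>
    intro V f
    obtain ⟨Q, _, hQ, hQψ⟩ := ih (V := V ⊕ Fin 1)
      (Sum.elim (Sum.inl ∘ f ∘ Sum.inl) (Fin.snoc (Sum.inl ∘ f ∘ Sum.inr) (Sum.inr 0)))
    refine ⟨_, _, all _ _ _ hQ, fun e u v xs h => ?_⟩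
    simp only [Set.forall_mem_range]
    refine forall_congr' fun y => (hQψ e _ _ _ (elim_snoc_eq_elim_comp h y)).trans ?_
    rw [Sum.comp_elim]
    rfl

end Definability

section Relativization

variable {L : FirstOrder.Language} {V W : Type} {d : L.Formula (Fin 2)} {r : ℕ}

theorem Definable.exists_relativized [L.IsRelational] {D : Query.{w} L (V ⊕ Fin 1)}
    (hD : Definable D) {Q : Query.{w} L W} (hQ : Definable Q) :
    ∃ P : Query.{w} L (V ⊕ W), Definable P ∧
      ∀ (M : Type w) [L.Structure M] (S T : Set M) (a : V → M) (b : W → M), T ⊆ S →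
        (∀ y ∈ S, D M S (Sum.elim a fun _ => y) ↔ y ∈ T) → (∀ i, b i ∈ T) →
          (P M S (Sum.elim a b) ↔ Q M T b) := by
  induction hQ using Definable.induction_on with
  | eq W i j => exact ⟨_, .eq (.inr i) (.inr j), fun _ _ _ _ _ _ _ _ _ => Iff.rfl⟩
  | rel W n R g => exact ⟨_, .rel R (Sum.inr ∘ g), fun _ _ _ _ _ _ _ _ _ => Iff.rfl⟩
  | falsum W => exact ⟨_, .falsum, fun _ _ _ _ _ _ _ _ _ => Iff.rfl⟩
  | imp W Q₁ Q₂ _ _ ih₁ ih₂ =>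
    obtain ⟨P₁, hP₁, h₁⟩ := ih₁
    obtain ⟨P₂, hP₂, h₂⟩ := ih₂
    exact ⟨_, hP₁.imp hP₂, fun M _ S T a b hTS hT hb =>
      imp_congr (h₁ M S T a b hTS hT hb) (h₂ M S T a b hTS hT hb)⟩
  | all W Q _ ih =>
    obtain ⟨P, hP, h⟩ := ih
    refine ⟨_, ((hD.comp (Sum.map Sum.inl id)).imp
      (hP.comp (Equiv.sumAssoc V W (Fin 1)).symm)).all, fun M _ S T a b hTS hT hb => ?_⟩
    have hD' (y : M) (hy : y ∈ S) :
        D M S (Sum.elim (Sum.elim a b) (fun _ => y) ∘ Sum.map Sum.inl id) ↔ y ∈ T := by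
      rw [Sum.elim_comp_map, Sum.elim_comp_inl, Function.comp_id, hT y hy]
    have hP' (y : M) (hy : y ∈ T) :
        P M S (Sum.elim (Sum.elim a b) (fun _ => y) ∘ (Equiv.sumAssoc V W (Fin 1)).symm) ↔
          Q M T (Sum.elim b fun _ => y) := by
      rw [← h M S T a _ hTS hT (elim_mem hb fun _ => hy)]
      congr! 1
      ext (i | i | i) <;> rfl
    exact ⟨fun H y hy => (hP' y hy).1 (H y (hTS hy) ((hD' y (hTS hy)).2 hy)), fun H y hyS hy =>
      (hP' y ((hD' y hyS).1 hy)).2 (H y ((hD' y hyS).1 hy))⟩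
  | congr W Q₁ Q₂ _ hQ ih =>
    obtain ⟨P, hP, h⟩ := ih
    exact ⟨P, hP, fun M _ S T a b hTS hT hb => (h M S T a b hTS hT hb).trans (hQ M T b hb)⟩

theorem definable_edist_le (hd : IsDistFormula.{w} L r d) (i j : V) :
    Definable (fun _ _ S u => (gaifmanGraph L S).edist (u i) (u j) ≤ r : Query.{w} L V) := by
  refine ⟨d.relabel ![i, j], fun e u => Formula.realize_relabel.trans ?_⟩
  rw [← FinVec.map_eq]
  exact (hd _ (u i) (u j)).trans (edist_gaifmanGraph_range_le_iff e _ _).symm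

theorem definable_mem_nbhdIn (hd : IsDistFormula.{w} L r d) [Finite W] (f : W → V) (j : V) :
    Definable (fun _ _ S u => u j ∈ nbhdIn L S r (u ∘ f) : Query.{w} L V) :=
  .exists_finite fun i => definable_edist_le hd (f i) j

theorem Definable.on_nbhdIn [L.IsRelational] (hd : IsDistFormula.{w} L r d) [Finite V]
    {Q : Query.{w} L V} (hQ : Definable Q) :
    Definable (fun M _ S u => Q M (nbhdIn L S r u) u : Query.{w} L V) := by
  have hD : Definable (fun _ _ S u => u (.inr 0) ∈ nbhdIn L S r (u ∘ .inl) :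
      Query.{w} L (V ⊕ Fin 1)) := definable_mem_nbhdIn hd Sum.inl (.inr 0)
  obtain ⟨P, hP, h⟩ := hD.exists_relativized hQ
  refine (hP.comp (Sum.elim id id)).congr fun M _ S u hu => ?_
  rw [Sum.comp_elim, Function.comp_id]
  exact h M S _ u u (nbhdIn_subset hu) (fun _ _ => Iff.rfl) fun i => mem_nbhdIn_self i

theorem Definable.ex_nbhdIn (hd : IsDistFormula.{w} L r d) [Finite V] [Finite W]
    {Q : Query.{w} L (V ⊕ W)} (hQ : Definable Q) :
    Definable (fun M _ S u => ∃ y : W → M, (∀ i, y i ∈ nbhdIn L S r u) ∧ Q M S (Sum.elim u y) :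
      Query.{w} L V) := by
  refine ((Definable.forall_finite fun i => definable_mem_nbhdIn hd Sum.inl (.inr i)).and
    hQ).ex_family.congr fun M _ S u hu => exists_congr fun y => ?_
  exact ⟨And.right, fun h => ⟨fun i => nbhdIn_subset hu (h.1 i), h⟩⟩

end Relativization

section FefermanVaught

variable {L : FirstOrder.Language} {V W : Type}

/-- No element of `A` is equal or adjacent to an element of `B`, in the substructure induced on
`A ∪ B`; that is, this substructure is the disjoint union of its parts `A` and `B`. -/
def Separated (L : FirstOrder.Language) {M : Type*} [L.Structure M] (A B : Set M) : Prop :=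
  ∀ a ∈ A, ∀ b ∈ B, 1 < (gaifmanGraph L (A ∪ B)).edist a b

theorem Separated.ne {M : Type*} [L.Structure M] {A B : Set M} (h : Separated L A B) {a b : M}
    (ha : a ∈ A) (hb : b ∈ B) : a ≠ b := by
  rintro rfl
  simpa using h a ha a hb

/-- A property of a pair of substructures, given with families of elements of each of them. -/
abbrev PairQuery (L : FirstOrder.Language) (V W : Type) :=
  ∀ (M : Type w) [L.Structure M], Set M → Set M → (V → M) → (W → M) → Prop

/-- Properties of separated pairs of substructures that are finite unions of rectangles
with definable sides. -/
inductive Rectangular : PairQuery.{w} L V W → Prop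
  | rect {P : Query.{w} L V} {Q : Query.{w} L W} : Definable P → Definable Q →
      Rectangular fun M _ A B a b => P M A a ∧ Q M B b
  | or {P Q : PairQuery.{w} L V W} : Rectangular P → Rectangular Q →
      Rectangular fun M _ A B a b => P M A B a b ∨ Q M A B a b
  | congr {P Q : PairQuery.{w} L V W} : Rectangular P →
      (∀ (M : Type w) [L.Structure M] (A B : Set M) (a : V → M) (b : W → M), Separated L A B →
        (∀ i, a i ∈ A) → (∀ i, b i ∈ B) → (P M A B a b ↔ Q M A B a b)) → Rectangular Q

namespace Rectangular

variable {P Q : PairQuery.{w} L V W}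

theorem left {P : Query.{w} L V} (hP : Definable P) :
    Rectangular (fun M _ A _ a _ => P M A a : PairQuery.{w} L V W) :=
  (rect hP Definable.falsum.not).congr fun M _ A B a b _ _ _ => by tauto

theorem right {Q : Query.{w} L W} (hQ : Definable Q) :
    Rectangular (fun M _ _ B _ b => Q M B b : PairQuery.{w} L V W) :=
  (rect Definable.falsum.not hQ).congr fun M _ A B a b _ _ _ => by tauto

theorem falsum : Rectangular (fun _ _ _ _ _ _ => False : PairQuery.{w} L V W) :=
  left Definable.falsum

theorem and (hP : Rectangular P) (hQ : Rectangular Q) :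
    Rectangular (fun M _ A B a b => P M A B a b ∧ Q M A B a b : PairQuery.{w} L V W) := by
  induction hP with
  | @rect p q hp hq =>
    induction hQ with
    | rect hp' hq' =>
      exact (rect (hp.and hp') (hq.and hq')).congr fun _ _ _ _ _ _ _ _ _ => and_and_and_comm
    | or _ _ ih ih' => exact (ih.or ih').congr fun _ _ _ _ _ _ _ _ _ => and_or_left.symm
    | congr _ h ih =>
      exact ih.congr fun M _ A B a b hs ha hb => and_congr_right' (h M A B a b hs ha hb)
  | or _ _ ih ih' => exact (ih.or ih').congr fun _ _ _ _ _ _ _ _ _ => or_and_right.symm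
  | congr _ h ih =>
    exact ih.congr fun M _ A B a b hs ha hb => and_congr_left' (h M A B a b hs ha hb)

theorem not (hP : Rectangular P) :
    Rectangular (fun M _ A B a b => ¬ P M A B a b : PairQuery.{w} L V W) := by
  induction hP with
  | rect hp hq =>
    exact ((left hp.not).or (right hq.not)).congr fun _ _ _ _ _ _ _ _ _ =>
      not_and_or.symm
  | or _ _ ih ih' => exact (ih.and ih').congr fun _ _ _ _ _ _ _ _ _ => not_or.symm
  | congr _ h ih => exact ih.congr fun M _ A B a b hs ha hb => not_congr (h M A B a b hs ha hb)

theorem imp (hP : Rectangular P) (hQ : Rectangular Q) :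
    Rectangular (fun M _ A B a b => P M A B a b → Q M A B a b : PairQuery.{w} L V W) :=
  (hP.not.or hQ).congr fun _ _ _ _ _ _ _ _ _ => imp_iff_not_or.symm

theorem ex_left {P : PairQuery.{w} L (V ⊕ Fin 1) W} (hP : Rectangular P) :
    Rectangular (fun M _ A B a b => ∃ y ∈ A, P M A B (Sum.elim a fun _ => y) b :
      PairQuery.{w} L V W) := by
  induction hP with
  | rect hp hq =>
    exact (rect hp.ex hq).congr fun M _ A B a b _ _ _ => by
      simp only [← and_assoc, exists_and_right]
  | or _ _ ih ih' =>
    exact (ih.or ih').congr fun M _ A B a b _ _ _ => by simp only [← exists_or, ← and_or_left]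
  | congr _ h ih =>
    exact ih.congr fun M _ A B a b hs ha hb => exists_congr fun y => and_congr_right fun hy =>
      h M A B _ b hs (elim_mem ha fun _ => hy) hb

theorem ex_right {P : PairQuery.{w} L V (W ⊕ Fin 1)} (hP : Rectangular P) :
    Rectangular (fun M _ A B a b => ∃ y ∈ B, P M A B a (Sum.elim b fun _ => y) :
      PairQuery.{w} L V W) := by
  induction hP with
  | rect hp hq =>
    exact (rect hp hq.ex).congr fun M _ A B a b _ _ _ => by
      simp only [and_left_comm, exists_and_left]
  | or _ _ ih ih' =>
    exact (ih.or ih').congr fun M _ A B a b _ _ _ => by simp only [← exists_or, ← and_or_left]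
  | congr _ h ih =>
    exact ih.congr fun M _ A B a b hs ha hb => exists_congr fun y => and_congr_right fun hy =>
      h M A B a _ hs ha (elim_mem hb fun _ => hy)

theorem eq (i j : V ⊕ W) :
    Rectangular (fun _ _ _ _ a b => Sum.elim a b i = Sum.elim a b j : PairQuery.{w} L V W) := by
  rcases i with i | i <;> rcases j with j | j
  · exact left (.eq i j)
  · exact falsum.congr fun _ _ _ _ _ _ hs ha hb => iff_of_false id (hs.ne (ha i) (hb j))
  · exact falsum.congr fun _ _ _ _ _ _ hs ha hb => iff_of_false id (hs.ne (ha j) (hb i)).symm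
  · exact right (.eq i j)

theorem rel {n : ℕ} (R : L.Relations n) (g : Fin n → V ⊕ W) :
    Rectangular (fun _ _ _ _ a b => Structure.RelMap R (Sum.elim a b ∘ g) :
      PairQuery.{w} L V W) := by
  by_cases hl : ∀ i, ∃ j, g i = Sum.inl j
  · choose g' hg' using hl
    obtain rfl : g = Sum.inl ∘ g' := funext hg'
    exact left (.rel R g')
  by_cases hr : ∀ i, ∃ j, g i = Sum.inr j
  · choose g' hg' using hr
    obtain rfl : g = Sum.inr ∘ g' := funext hg'
    exact right (.rel R g')
  simp only [← Sum.isLeft_iff, ← Sum.isRight_iff, not_forall, Bool.not_eq_true,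
    Sum.isLeft_eq_false, Sum.isRight_eq_false] at hl hr
  obtain ⟨j, hj⟩ := hl
  obtain ⟨j', hj'⟩ := Sum.isRight_iff.1 hj
  obtain ⟨i, hi⟩ := hr
  obtain ⟨i', hi'⟩ := Sum.isLeft_iff.1 hi
  refine falsum.congr fun M _ A B a b hs ha hb => iff_of_false id fun hR => ?_
  have h : (gaifmanGraph L (A ∪ B)).edist (a i') (b j') ≤ 1 := by
    simpa [hi', hj'] using edist_gaifmanGraph_le_one hR (fun l => elim_mem_union ha hb (g l)) i j
  exact (hs _ (ha i') _ (hb j')).not_ge h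

end Rectangular

theorem Definable.rectangular [L.IsRelational] {U : Type} {Q : Query.{w} L U} (hQ : Definable Q)
    (f : U → V ⊕ W) :
    Rectangular (fun M _ A B a b => Q M (A ∪ B) (Sum.elim a b ∘ f) : PairQuery.{w} L V W) := by
  induction hQ using Definable.induction_on generalizing V W with
  | eq U i j => exact .eq (f i) (f j)
  | rel U n R g => exact .rel R (f ∘ g)
  | falsum U => exact .falsum
  | imp U P Q _ _ ih ih' => exact (ih f).imp (ih' f)
  | all U Q _ ih =>
    let f₁ : U ⊕ Fin 1 → (V ⊕ Fin 1) ⊕ W :=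
      Sum.elim (Sum.map Sum.inl id ∘ f) fun _ => Sum.inl (Sum.inr 0)
    let f₂ : U ⊕ Fin 1 → V ⊕ (W ⊕ Fin 1) :=
      Sum.elim (Sum.map id Sum.inl ∘ f) fun _ => Sum.inr (Sum.inr 0)
    refine ((ih f₁).not.ex_left.or (ih f₂).not.ex_right).not.congr fun M _ A B a b _ _ _ => ?_
    have h₁ (y : M) : Sum.elim (Sum.elim a fun _ => y) b ∘ f₁ =
        Sum.elim (Sum.elim a b ∘ f) fun _ => y := by
      rw [Sum.comp_elim, ← Function.comp_assoc, Sum.elim_comp_map, Sum.elim_comp_inl,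
        Function.comp_id]
      rfl
    have h₂ (y : M) : Sum.elim a (Sum.elim b fun _ => y) ∘ f₂ =
        Sum.elim (Sum.elim a b ∘ f) fun _ => y := by
      rw [Sum.comp_elim, ← Function.comp_assoc, Sum.elim_comp_map, Sum.elim_comp_inl,
        Function.comp_id]
      rfl
    simp only [h₁, h₂]
    push Not
    simp only [Set.mem_union, or_imp, forall_and]
  | congr U P Q _ h ih =>
    exact (ih f).congr fun M _ A B a b _ ha hb => h M _ _ fun i =>
      elim_mem_union ha hb (f i)

theorem separated_nbhdIn {M : Type*} [L.Structure M] {S : Set M} {r : ℕ} {u : V → M} {v : W → M}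
    (hu : ∀ i, u i ∈ S) (hv : ∀ j, v j ∈ S) (h : ∀ j, v j ∉ nbhdIn L S (2 * r + 1) u) :
    Separated L (nbhdIn L S r u) (nbhdIn L S r v) := by
  rintro a ⟨i, ha⟩ b ⟨j, hb⟩
  by_contra! hab
  rw [SimpleGraph.edist_comm] at hb
  have hab' := hab.trans' (SimpleGraph.edist_anti (gaifmanGraph_mono
    (Set.union_subset (nbhdIn_subset hu) (nbhdIn_subset hv))))
  exact h j ⟨i, edist_le_of_add_le (edist_le_of_add_le ha (mod_cast hab') le_rfl) hb (by omega)⟩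

end FefermanVaught

section Locality

variable {L : FirstOrder.Language} {V W : Type} {r s : ℕ} {P Q : Query.{w} L V}

/-- A query is `r`-local if its truth value does not change when the structure is restricted to the
`r`-neighbourhood of the arguments. -/
def IsLocal (r : ℕ) (Q : Query.{w} L V) : Prop :=
  ∀ (M : Type w) [L.Structure M] (S : Set M) (u : V → M), (∀ i, u i ∈ S) →
    (Q M S u ↔ Q M (nbhdIn L S r u) u)

theorem IsLocal.iff_of_subset (hQ : IsLocal r Q) {M : Type w} [L.Structure M] {S T : Set M}
    {u : V → M} (hu : ∀ i, u i ∈ S) (hTS : T ⊆ S) (hT : nbhdIn L S r u ⊆ T) :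
    Q M S u ↔ Q M T u := by
  rw [hQ M S u hu, hQ M T u fun i => hT (mem_nbhdIn_self i), nbhdIn_eq_of_subset hTS hT]

theorem IsLocal.mono (hQ : IsLocal r Q) (hrs : r ≤ s) : IsLocal s Q :=
  fun _ _ _ _ hu => hQ.iff_of_subset hu (nbhdIn_subset hu) (nbhdIn_mono hrs)

theorem IsLocal.not (hQ : IsLocal r Q) :
    IsLocal r (fun M _ S u => ¬ Q M S u : Query.{w} L V) :=
  fun M _ S u hu => not_congr (hQ M S u hu)

theorem IsLocal.and (hP : IsLocal r P) (hQ : IsLocal r Q) :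
    IsLocal r (fun M _ S u => P M S u ∧ Q M S u : Query.{w} L V) :=
  fun M _ S u hu => and_congr (hP M S u hu) (hQ M S u hu)

theorem IsLocal.imp (hP : IsLocal r P) (hQ : IsLocal s Q) :
    IsLocal (max r s) (fun M _ S u => P M S u → Q M S u : Query.{w} L V) := fun M _ S u hu =>
  imp_congr (hP.mono (le_max_left r s) M S u hu) (hQ.mono (le_max_right r s) M S u hu)

theorem IsLocal.comp {Q : Query.{w} L W} (hQ : IsLocal r Q) (f : W → V) :
    IsLocal r (fun M _ S u => Q M S (u ∘ f) : Query.{w} L V) := fun _ _ _ _ hu =>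
  hQ.iff_of_subset (fun i => hu (f i)) (nbhdIn_subset hu) (nbhdIn_comp_subset f)

theorem isLocal_on_nbhdIn (Q : Query.{w} L V) (r : ℕ) :
    IsLocal r (fun M _ S u => Q M (nbhdIn L S r u) u : Query.{w} L V) := fun _ _ _ _ hu => by
  beta_reduce
  rw [← nbhdIn_eq_of_subset (nbhdIn_subset hu) subset_rfl]

theorem isLocal_mem_nbhdIn (r : ℕ) (f : W → V) (j : V) :
    IsLocal r (fun _ _ S u => u j ∈ nbhdIn L S r (u ∘ f) : Query.{w} L V) := fun _ _ _ _ hu => by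
  beta_reduce
  rw [← nbhdIn_eq_of_subset (nbhdIn_subset hu) (nbhdIn_comp_subset f)]

theorem IsLocal.ex_nbhdIn {Q : Query.{w} L (V ⊕ W)} (hQ : IsLocal r Q) (R : ℕ) :
    IsLocal (R + r) (fun M _ S u => ∃ y : W → M, (∀ i, y i ∈ nbhdIn L S R u) ∧
      Q M S (Sum.elim u y) : Query.{w} L V) := by
  intro M _ S u hu
  beta_reduce
  rw [← nbhdIn_eq_of_subset (nbhdIn_subset hu) (nbhdIn_mono (Nat.le_add_right R r))]
  refine exists_congr fun y => and_congr_right fun hy => ?_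
  refine hQ.iff_of_subset (elim_mem hu fun i => nbhdIn_subset hu (hy i)) (nbhdIn_subset hu) ?_
  rw [nbhdIn_elim]
  exact Set.union_subset (nbhdIn_mono (Nat.le_add_left r R))
    (nbhdIn_subset_nbhdIn_of_forall_mem hy le_rfl)

end Locality

section Scattered

variable {L : FirstOrder.Language} {V ι : Type} {r : ℕ} {β : Query.{w} L (Fin 1)}

/-- The elements `y i` satisfy `β` and are pairwise at distance greater than `2 * r`: these are the
witnesses of a basic local sentence of radius `r`. -/
def IsScattered (β : Query.{w} L (Fin 1)) (r : ℕ) : Query.{w} L ι := fun M _ S y =>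
  (∀ i j, i ≠ j → ¬ (gaifmanGraph L S).edist (y i) (y j) ≤ (2 * r : ℕ)) ∧ ∀ i, β M S fun _ => y i

/-- The property expressed by the basic local sentence with `n` witnesses satisfying `β`. -/
def HasScattered (β : Query.{w} L (Fin 1)) (r n : ℕ) {M : Type w} [L.Structure M] (S : Set M) :
    Prop :=
  ∃ y : Fin n → M, (∀ i, y i ∈ S) ∧ IsScattered β r M S y

theorem Definable.isScattered [Finite ι] {d : L.Formula (Fin 2)}
    (hd : IsDistFormula.{w} L (2 * r) d) (hβ : Definable β) :
    Definable (IsScattered (ι := ι) β r) := by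
  have hdist : Definable (fun _ _ S y => ∀ p : {p : ι × ι // p.1 ≠ p.2},
      ¬ (gaifmanGraph L S).edist (y p.1.1) (y p.1.2) ≤ (2 * r : ℕ) : Query.{w} L ι) :=
    .forall_finite fun p => (definable_edist_le hd p.1.1 p.1.2).not
  refine (hdist.and (.forall_finite fun i => hβ.comp fun _ => i)).congr fun M _ S y _ => ?_
  exact and_congr_left' ⟨fun h i j hij => h ⟨(i, j), hij⟩, fun h p => h _ _ p.2⟩

theorem IsLocal.isScattered (hβ : IsLocal r β) : IsLocal (2 * r) (IsScattered (ι := ι) β r) := by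
  intro M _ S y hy
  refine and_congr (forall_congr' fun i => forall₂_congr fun j _ => not_congr ?_)
    (forall_congr' fun i => ((hβ.mono (Nat.le_mul_of_pos_left r two_pos)).comp _) M S y hy)
  exact edist_gaifmanGraph_le_iff (nbhdIn_subset hy) (fun c hc => ⟨i, hc⟩) _

variable {M : Type w} [L.Structure M] {S : Set M}

theorem IsScattered.snoc {n : ℕ} {z : Fin n → M} {y : M} (hz : IsScattered β r M S z)
    (hy : β M S fun _ => y) (hzy : ∀ i, ¬ (gaifmanGraph L S).edist (z i) y ≤ (2 * r : ℕ)) :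
    IsScattered β r M S (Fin.snoc z y : Fin (n + 1) → M) := by
  refine ⟨fun i j hij => ?_, fun i => ?_⟩
  · induction i using Fin.lastCases with
    | last =>
      induction j using Fin.lastCases with
      | last => exact absurd rfl hij
      | cast j => simpa [SimpleGraph.edist_comm] using hzy j
    | cast i =>
      induction j using Fin.lastCases with
      | last => simpa using hzy i
      | cast j => simpa using hz.1 i j (by simpa using hij)
  · induction i using Fin.lastCases with
    | last => simpa using hy
    | cast i => simpa using hz.2 i

theorem IsScattered.card_le [Fintype ι] [Fintype V] {u : V → M} {z : ι → M}
    (hz : IsScattered β r M S z) (hzu : ∀ i, z i ∈ nbhdIn L S r u) :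
    Fintype.card ι ≤ Fintype.card V := by
  choose g hg using hzu
  refine Fintype.card_le_of_injective g fun i j hij => ?_
  by_contra hne
  exact hz.1 i j hne
    (edist_le_of_add_le (SimpleGraph.edist_comm ▸ hg i) (hij ▸ hg j) (two_mul r).ge)

-- If no `β`-point lay in the annulus around `u` of radii `r` and `3 * r`, a `β`-point beyond it
-- could be added to every scattered family inside the `r`-neighbourhood of `u`. Were the result
-- always movable back into that neighbourhood, it would hold scattered families of any size,
-- whereas `IsScattered.card_le` bounds them by the number of components of `u`.
theorem exists_notMem_nbhdIn_iff [Fintype V] {u : V → M} (hu : ∀ i, u i ∈ S) :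
    (∃ y ∈ S, y ∉ nbhdIn L S r u ∧ β M S fun _ => y) ↔
      (∃ n < Fintype.card V + 2, HasScattered β r n S ∧
        ¬ ∃ y : Fin n → M, (∀ i, y i ∈ nbhdIn L S r u) ∧ IsScattered β r M S y) ∨
      ∃ y ∈ nbhdIn L S (3 * r) u, y ∉ nbhdIn L S r u ∧ β M S fun _ => y := by
  constructor
  · rintro ⟨y, hyS, hyu, hy⟩
    by_contra! ⟨hfew, hnear⟩
    have hall (n : ℕ) (hn : n < Fintype.card V + 2) :
        ∃ z : Fin n → M, (∀ i, z i ∈ nbhdIn L S r u) ∧ IsScattered β r M S z := by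
      induction n with
      | zero => exact ⟨finZeroElim, fun i => i.elim0, fun i => i.elim0, fun i => i.elim0⟩
      | succ n ih =>
        obtain ⟨z, hzu, hz⟩ := ih (by omega)
        refine hfew (n + 1) hn ⟨Fin.snoc z y, fun i => ?_, hz.snoc hy fun i h => ?_⟩
        · refine Fin.lastCases ?_ (fun i => ?_) i
          · simpa using hyS
          · simpa using nbhdIn_subset hu (hzu i)
        · obtain ⟨j, hj⟩ := hzu i
          exact hnear y ⟨j, edist_le_of_add_le hj h (by omega)⟩ hyu hy
    obtain ⟨z, hzu, hz⟩ := hall (Fintype.card V + 1) (by omega)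
    simpa using hz.card_le hzu
  · rintro (⟨n, -, ⟨y, hyS, hy⟩, hfew⟩ | ⟨y, hy, h⟩)
    · by_contra! hall
      exact hfew ⟨y, fun i => by_contra fun hi => hall _ (hyS i) hi (hy.2 i), hy⟩
    · exact ⟨y, nbhdIn_subset hu hy, h⟩

end Scattered

section GaifmanTree

variable {L : FirstOrder.Language} {V : Type}

/-- Decision trees for queries: inner nodes branch on basic local sentences and leaves are definable
local queries. They have the strength of Boolean combinations of these, but existential
quantifiers commute with branching, so that eliminating a quantifier is a matter of the leaves. -/
inductive GaifmanTree : Query.{w} L V → Prop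
  | leaf {r : ℕ} {Q : Query.{w} L V} : Definable Q → IsLocal r Q → GaifmanTree Q
  | node (r n : ℕ) {β : Query.{w} L (Fin 1)} {P Q : Query.{w} L V} : Definable β → IsLocal r β →
      GaifmanTree P → GaifmanTree Q → GaifmanTree fun M _ S u =>
        (HasScattered β r n S → P M S u) ∧ (¬ HasScattered β r n S → Q M S u)
  | congr {P Q : Query.{w} L V} : GaifmanTree P →
      (∀ (M : Type w) [L.Structure M] (S : Set M) (u : V → M), (∀ i, u i ∈ S) →
        (P M S u ↔ Q M S u)) → GaifmanTree Q

namespace GaifmanTree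

variable {P Q : Query.{w} L V}

theorem falsum : GaifmanTree (fun _ _ _ _ => False : Query.{w} L V) :=
  leaf (r := 0) .falsum fun _ _ _ _ _ => Iff.rfl

theorem imp (hP : GaifmanTree P) (hQ : GaifmanTree Q) :
    GaifmanTree (fun M _ S u => P M S u → Q M S u : Query.{w} L V) := by
  induction hP with
  | leaf hp hr =>
    induction hQ with
    | leaf hq hs => exact leaf (hp.imp hq) (hr.imp hs)
    | node r n hβ hl _ _ ih ih' => exact (node r n hβ hl ih ih').congr fun _ _ _ _ _ => by tauto
    | congr _ h ih => exact ih.congr fun M _ S u hu => imp_congr_right fun _ => h M S u hu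
  | node r n hβ hl _ _ ih ih' => exact (node r n hβ hl ih ih').congr fun _ _ _ _ _ => by tauto
  | congr _ h ih => exact ih.congr fun M _ S u hu => imp_congr_left (h M S u hu)

theorem not (hP : GaifmanTree P) : GaifmanTree (fun M _ S u => ¬ P M S u : Query.{w} L V) :=
  hP.imp falsum

theorem and (hP : GaifmanTree P) (hQ : GaifmanTree Q) :
    GaifmanTree (fun M _ S u => P M S u ∧ Q M S u : Query.{w} L V) :=
  (hP.imp hQ.not).not.congr fun _ _ _ _ _ => by tauto

theorem or (hP : GaifmanTree P) (hQ : GaifmanTree Q) :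
    GaifmanTree (fun M _ S u => P M S u ∨ Q M S u : Query.{w} L V) :=
  (hP.not.imp hQ).congr fun _ _ _ _ _ => or_iff_not_imp_left.symm

theorem exists_lt {Q : ℕ → Query.{w} L V} (hQ : ∀ n, GaifmanTree (Q n)) (m : ℕ) :
    GaifmanTree (fun M _ S u => ∃ n < m, Q n M S u : Query.{w} L V) := by
  induction m with
  | zero => exact falsum.congr fun _ _ _ _ _ => by simp
  | succ m ih =>
    exact (ih.or (hQ m)).congr fun M _ S u _ => by
      simp only [Nat.lt_succ_iff_lt_or_eq, or_and_right, exists_or, exists_eq_left]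

theorem hasScattered {β : Query.{w} L (Fin 1)} (hβ : Definable β) {r : ℕ} (hr : IsLocal r β)
    (n : ℕ) : GaifmanTree (fun _ _ S _ => HasScattered β r n S : Query.{w} L V) :=
  (node r n hβ hr falsum.not falsum).congr fun _ _ _ _ _ => by tauto

variable [Finite V] {d : ℕ → L.Formula (Fin 2)}

theorem ex_family_nbhdIn (hd : ∀ r, IsDistFormula.{w} L r (d r)) {W : Type} [Finite W]
    {Q : Query.{w} L (V ⊕ W)} (hQ : Definable Q) {r : ℕ} (hr : IsLocal r Q) (R : ℕ) :
    GaifmanTree (fun M _ S u => ∃ y : W → M, (∀ i, y i ∈ nbhdIn L S R u) ∧ Q M S (Sum.elim u y) :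
      Query.{w} L V) :=
  leaf (hQ.ex_nbhdIn (hd R)) (hr.ex_nbhdIn R)

theorem ex_nbhdIn (hd : ∀ r, IsDistFormula.{w} L r (d r)) {Q : Query.{w} L (V ⊕ Fin 1)}
    (hQ : Definable Q) {r : ℕ} (hr : IsLocal r Q) (R : ℕ) :
    GaifmanTree (fun M _ S u => ∃ y ∈ nbhdIn L S R u, Q M S (Sum.elim u fun _ => y) :
      Query.{w} L V) :=
  (ex_family_nbhdIn hd hQ hr R).congr fun _ _ _ _ _ => exists_fin_one_arrow.trans <|
    exists_congr fun _ => and_congr_left fun _ => forall_const (Fin 1)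

theorem ex_notMem_nbhdIn (hd : ∀ r, IsDistFormula.{w} L r (d r)) {β : Query.{w} L (Fin 1)}
    (hβ : Definable β) {r : ℕ} (hr : IsLocal r β) :
    GaifmanTree (fun M _ S u => ∃ y ∈ S, y ∉ nbhdIn L S r u ∧ β M S fun _ => y :
      Query.{w} L V) := by
  have := Fintype.ofFinite V
  have hscattered (n : ℕ) : GaifmanTree (fun M _ S u => ∃ y : Fin n → M,
      (∀ i, y i ∈ nbhdIn L S r u) ∧ IsScattered β r M S y : Query.{w} L V) :=
    ex_family_nbhdIn hd ((Definable.isScattered (hd (2 * r)) hβ).comp Sum.inr)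
      (hr.isScattered.comp Sum.inr) r
  have hannulus : GaifmanTree (fun M _ S u => ∃ y ∈ nbhdIn L S (3 * r) u,
      y ∉ nbhdIn L S r u ∧ β M S fun _ => y : Query.{w} L V) :=
    ex_nbhdIn hd ((definable_mem_nbhdIn (hd r) Sum.inl (.inr 0)).not.and (hβ.comp Sum.inr))
      ((isLocal_mem_nbhdIn r Sum.inl (.inr 0)).not.and (hr.comp Sum.inr)) (3 * r)
  exact ((exists_lt (fun n => (hasScattered hβ hr n).and (hscattered n).not) _).or
    hannulus).congr fun _ _ _ _ hu => (exists_notMem_nbhdIn_iff hu).symm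

variable [L.IsRelational]

theorem ex_notMem_nbhdIn_rectangular (hd : ∀ r, IsDistFormula.{w} L r (d r))
    {P : PairQuery.{w} L V (Fin 1)} (hP : Rectangular P) (r : ℕ) :
    GaifmanTree (fun M _ S u => ∃ y ∈ S, y ∉ nbhdIn L S (2 * r + 1) u ∧
      P M (nbhdIn L S r u) (nbhdIn L S r fun _ : Fin 1 => y) u fun _ => y : Query.{w} L V) := by
  induction hP with
  | @rect P Q hP hQ =>
    have hnear : GaifmanTree (fun M _ S u => P M (nbhdIn L S r u) u : Query.{w} L V) :=
      leaf (hP.on_nbhdIn (hd r)) (isLocal_on_nbhdIn P r)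
    have hfar := ex_notMem_nbhdIn (V := V) hd (hQ.on_nbhdIn (hd r))
      ((isLocal_on_nbhdIn Q r).mono (by omega : r ≤ 2 * r + 1))
    refine (hnear.and hfar).congr fun _ _ _ _ _ => ?_
    simp only [and_left_comm, exists_and_left]
  | or _ _ ih ih' =>
    exact (ih.or ih').congr fun _ _ _ _ _ => by simp only [← exists_or, ← and_or_left]
  | congr _ h ih =>
    exact ih.congr fun M _ S u hu => exists_congr fun y => and_congr_right fun hyS =>
      and_congr_right fun hy => h M _ _ u _ (separated_nbhdIn hu (fun _ => hyS) fun _ => hy)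
        (fun i => mem_nbhdIn_self i) fun i => mem_nbhdIn_self i

theorem ex_leaf (hd : ∀ r, IsDistFormula.{w} L r (d r)) {Q : Query.{w} L (V ⊕ Fin 1)}
    (hQ : Definable Q) {r : ℕ} (hr : IsLocal r Q) :
    GaifmanTree (fun M _ S u => ∃ y ∈ S, Q M S (Sum.elim u fun _ => y) : Query.{w} L V) := by
  refine ((ex_nbhdIn hd hQ hr (2 * r + 1)).or
    (ex_notMem_nbhdIn_rectangular hd (hQ.rectangular id) r)).congr fun M _ S u hu => ?_
  have hunion (y : M) (hy : y ∈ S) :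
      Q M (nbhdIn L S r u ∪ nbhdIn L S r fun _ : Fin 1 => y) (Sum.elim u fun _ => y) ↔
        Q M S (Sum.elim u fun _ => y) := by
    rw [← nbhdIn_elim, ← hr M S _ (elim_mem hu fun _ => hy)]
  constructor
  · rintro (⟨y, hyu, hy⟩ | ⟨y, hyS, -, hy⟩)
    · exact ⟨y, nbhdIn_subset hu hyu, hy⟩
    · exact ⟨y, hyS, (hunion y hyS).1 hy⟩
  · rintro ⟨y, hyS, hy⟩
    by_cases hyu : y ∈ nbhdIn L S (2 * r + 1) u
    · exact Or.inl ⟨y, hyu, hy⟩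
    · exact Or.inr ⟨y, hyS, hyu, (hunion y hyS).2 hy⟩

theorem ex (hd : ∀ r, IsDistFormula.{w} L r (d r)) {Q : Query.{w} L (V ⊕ Fin 1)}
    (hQ : GaifmanTree Q) :
    GaifmanTree (fun M _ S u => ∃ y ∈ S, Q M S (Sum.elim u fun _ => y) : Query.{w} L V) := by
  induction hQ with
  | leaf hQ hr => exact ex_leaf hd hQ hr
  | @node r n β _ _ hβ hr _ _ ih ih' =>
    refine (node r n hβ hr ih ih').congr fun _ _ S _ _ => ?_
    by_cases h : HasScattered β r n S <;> simp [h]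
  | congr _ h ih =>
    exact ih.congr fun M _ S u hu => exists_congr fun y => and_congr_right fun hy =>
      h M S _ (elim_mem hu fun _ => hy)

end GaifmanTree

theorem Definable.gaifmanTree [L.IsRelational] {d : ℕ → L.Formula (Fin 2)}
    (hd : ∀ r, IsDistFormula.{w} L r (d r)) {Q : Query.{w} L V} (hQ : Definable Q) :
    ∀ [Finite V], GaifmanTree Q := by
  induction hQ using Definable.induction_on with
  | eq V i j =>
    intro _
    exact .leaf (r := 0) (.eq i j) fun _ _ _ _ _ => Iff.rfl
  | rel V n R g =>
    intro _
    exact .leaf (r := 0) (.rel R g) fun _ _ _ _ _ => Iff.rfl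
  | falsum V =>
    intro _
    exact .falsum
  | imp V P Q _ _ ih ih' =>
    intro _
    exact ih.imp ih'
  | all V Q _ ih =>
    intro _
    exact (GaifmanTree.ex hd ih.not).not.congr fun M _ S u _ => by push Not; rfl
  | congr V P Q _ h ih =>
    intro _
    exact ih.congr h

end GaifmanTree

section NormalForm

variable {L : FirstOrder.Language} {k : ℕ}

namespace BoolComb

variable {F : Set (L.Formula (Fin k))} {φ ψ : L.Formula (Fin k)}

theorem not (hφ : BoolComb F φ) : BoolComb F φ.not := hφ.imp .falsum

theorem inf (hφ : BoolComb F φ) (hψ : BoolComb F ψ) : BoolComb F (φ ⊓ ψ) := (hφ.imp hψ.not).not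

end BoolComb

theorem realize_relabel_inr {α β M : Type*} [L.Structure M] {n : ℕ} (φ : L.Formula β)
    (g : β → Fin n) (u : α → M) (y : Fin n → M) :
    (BoundedFormula.relabel (Sum.inr ∘ g : β → α ⊕ Fin n) φ).Realize u y ↔ φ.Realize (y ∘ g) :=
  BoundedFormula.realize_relabel.trans <| iff_of_eq <|
    congrArg (BoundedFormula.Realize φ (y ∘ g)) (Subsingleton.elim _ _)

theorem realize_basicLocalSentence {d : ℕ → L.Formula (Fin 2)}
    (hd : ∀ r, IsDistFormula.{w} L r (d r)) (r n : ℕ) (ψ : L.Formula (Fin 1)) {M : Type w}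
    [L.Structure M] (u : Fin k → M) :
    (basicLocalSentence d r n ψ k).Realize u ↔ ∃ y : Fin n → M,
      (∀ i j, i < j → ¬ distLE L M (2 * r) (y i) (y j)) ∧ ∀ i, ψ.Realize fun _ => y i := by
  have hdist (y : Fin n → M) (i j : Fin n) :
      (BoundedFormula.relabel (![Sum.inr i, Sum.inr j] : Fin 2 → Fin k ⊕ Fin n)
        (d (2 * r))).Realize u y ↔ distLE L M (2 * r) (y i) (y j) := by
    have hy : y ∘ ![i, j] = ![y i, y j] := (FinVec.map_eq y _).symm
    rw [← hd (2 * r) M, ← hy, ← realize_relabel_inr _ _ u, ← FinVec.map_eq]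
    rfl
  have hψ (y : Fin n → M) (i : Fin n) :
      (BoundedFormula.relabel ((fun _ => Sum.inr i) : Fin 1 → Fin k ⊕ Fin n) ψ).Realize u y ↔
        ψ.Realize fun _ => y i := realize_relabel_inr ψ (fun _ => i) u y
  refine BoundedFormula.realize_exs.trans (exists_congr fun y => ?_)
  rw [BoundedFormula.realize_foldr_inf]
  simp only [List.forall_mem_append, List.forall_mem_map, List.mem_filter, List.mem_finRange,
    Prod.forall, List.pair_mem_product, decide_eq_true_eq, true_and, true_imp_iff,
    BoundedFormula.realize_not, hdist, hψ]

theorem range_embedding_refl (M : Type*) [L.Structure M] :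
    Set.range (Embedding.refl L M) = Set.univ := Set.range_id

theorem edist_gaifmanGraph_univ_le_iff {M : Type w} [L.Structure M] {r : ℕ} {a b : M} :
    (gaifmanGraph L Set.univ).edist a b ≤ r ↔ distLE L M r a b := by
  rw [← range_embedding_refl (L := L)]
  exact edist_gaifmanGraph_range_le_iff (Embedding.refl L M) a b

theorem nbhd_eq_nbhdIn_univ {M : Type w} [L.Structure M] (r : ℕ) (u : Fin k → M) :
    nbhd L M r u = nbhdIn L Set.univ r u := by
  simp only [nbhd, nbhdIn, edist_gaifmanGraph_univ_le_iff]

namespace Expresses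

variable {M : Type w} [L.Structure M]

theorem realize_iff {V : Type} {ψ : L.Formula V} {Q : Query.{w} L V} (h : Expresses ψ Q)
    (u : V → M) : ψ.Realize u ↔ Q M Set.univ u := by
  rw [← range_embedding_refl (L := L)]
  exact h (Embedding.refl L M) u

theorem realize_basicLocalSentence_iff {d : ℕ → L.Formula (Fin 2)}
    (hd : ∀ r, IsDistFormula.{w} L r (d r)) {ψ : L.Formula (Fin 1)} {β : Query.{w} L (Fin 1)}
    (hψ : Expresses ψ β) (r n : ℕ) (u : Fin k → M) :
    (basicLocalSentence d r n ψ k).Realize u ↔ HasScattered β r n (Set.univ : Set M) := by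
  simp only [realize_basicLocalSentence hd, HasScattered, IsScattered, Set.mem_univ, implies_true,
    true_and, edist_gaifmanGraph_univ_le_iff, realize_iff hψ]
  refine exists_congr fun y => and_congr_left' ⟨fun h i j hij => ?_, fun h i j hij => h i j hij.ne⟩
  have : Std.Symm fun i j => ¬ distLE L M (2 * r) (y i) (y j) := ⟨fun i j => by
    simp only [← edist_gaifmanGraph_univ_le_iff, SimpleGraph.edist_comm, imp_self]⟩
  exact pairwise_iff_lt.2 h hij

theorem rLocal [L.IsRelational] {ψ : L.Formula (Fin k)} {Q : Query.{w} L (Fin k)}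
    (h : Expresses ψ Q) {r : ℕ} (hr : IsLocal r Q) : RLocal.{w} L r ψ := fun M _ u =>
  calc ψ.Realize u ↔ Q M Set.univ u := realize_iff h u
    _ ↔ Q M (nbhd L M r u) u := by rw [nbhd_eq_nbhdIn_univ]; exact hr M _ u fun _ => trivial
    _ ↔ _ := (realize_induced h (nbhd L M r u) fun i => ⟨u i, i, distLE_self L M r (u i)⟩).symm

end Expresses

/-- The radius-`r` basic local sentences and the `r`-local formulas, for all `r`: the formulas from
which the Gaifman normal form is built. -/
def gaifmanFormulas (d : ℕ → L.Formula (Fin 2)) (k : ℕ) [L.IsRelational] :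
    Set (L.Formula (Fin k)) :=
  {χ | (∃ (r n : ℕ) (ψ : L.Formula (Fin 1)), RLocal.{w} L r ψ ∧ χ = basicLocalSentence d r n ψ k) ∨
    ∃ r : ℕ, RLocal.{w} L r χ}

theorem GaifmanTree.exists_boolComb [L.IsRelational] {d : ℕ → L.Formula (Fin 2)}
    (hd : ∀ r, IsDistFormula.{w} L r (d r)) {Q : Query.{w} L (Fin k)} (hQ : GaifmanTree Q) :
    ∃ φ : L.Formula (Fin k), BoolComb (gaifmanFormulas.{w} d k) φ ∧
      ∀ (M : Type w) [L.Structure M] (u : Fin k → M), φ.Realize u ↔ Q M Set.univ u := by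
  induction hQ with
  | leaf hQ hr =>
    obtain ⟨ψ, hψ⟩ := hQ
    exact ⟨ψ, .base (Or.inr ⟨_, Expresses.rLocal hψ hr⟩), fun _ _ => Expresses.realize_iff hψ⟩
  | node r n hβ hr _ _ ih ih' =>
    obtain ⟨p, hp, hpP⟩ := ih
    obtain ⟨q, hq, hqQ⟩ := ih'
    obtain ⟨ψ, hψ⟩ := hβ
    have hσ : BoolComb (gaifmanFormulas.{w} d k) (basicLocalSentence d r n ψ k) :=
      .base (Or.inl ⟨r, n, ψ, Expresses.rLocal hψ hr, rfl⟩)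
    refine ⟨_, (hσ.imp hp).inf (hσ.not.imp hq), fun M _ u => ?_⟩
    simp only [Formula.realize_inf, Formula.realize_imp, Formula.realize_not, hpP, hqQ,
      Expresses.realize_basicLocalSentence_iff hd hψ]
  | congr _ h ih =>
    obtain ⟨p, hp, hpP⟩ := ih
    exact ⟨p, hp, fun M _ u => (hpP M u).trans (h M _ u fun _ => trivial)⟩

/-- The isomorphism of a structure with the substructure induced on the range of an embedding. -/
noncomputable def equivInducedRange {M N : Type*} [L.Structure M] [L.Structure N]
    [L.IsRelational] (e : N ↪[L] M) :
    letI := inducedStructure L (Set.range e)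
    N ≃[L] Set.range e :=
  letI := inducedStructure L (Set.range e)
  { Equiv.ofInjective e e.injective with
    map_fun' := fun f => isEmptyElim f
    map_rel' := fun R t => e.map_rel R t }

theorem exists_expresses [L.IsRelational] {V : Type} (φ : L.Formula V) :
    ∃ Q : Query.{w} L V, Expresses φ Q := by
  refine ⟨fun M _ S u => ∃ v : V → S, (fun i => (v i : M)) = u ∧
    (letI := inducedStructure L S; φ.Realize v), fun {M N} _ _ e u => ?_⟩
  let := inducedStructure L (Set.range e)
  rw [← StrongHomClass.realize_formula (equivInducedRange e) φ]
  refine ⟨fun h => ⟨_, rfl, h⟩, fun ⟨v, hv, h⟩ => ?_⟩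
  obtain rfl : v = equivInducedRange e ∘ u := funext fun i => Subtype.ext (congrFun hv i)
  exact h

end NormalForm

theorem statement_6_general {L : FirstOrder.Language} [L.IsRelational]
    (k : ℕ) (d : ℕ → L.Formula (Fin 2)) (hd : ∀ r, IsDistFormula.{w} L r (d r))
    (φ : L.Formula (Fin k)) :
    ∃ φ' : L.Formula (Fin k),
      BoolComb {χ | (∃ (r kk : ℕ) (ψ : L.Formula (Fin 1)),
          RLocal.{w} L r ψ ∧ χ = basicLocalSentence d r kk ψ k) ∨
          (∃ r : ℕ, RLocal.{w} L r χ)} φ' ∧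
      ∀ (M : Type w) [L.Structure M] (u : Fin k → M), φ.Realize u ↔ φ'.Realize u := by
  obtain ⟨Q, hQ⟩ := exists_expresses.{w} φ
  obtain ⟨φ', hφ', h⟩ := (Definable.gaifmanTree hd ⟨φ, hQ⟩).exists_boolComb hd
  exact ⟨φ', hφ', fun M _ u => (Expresses.realize_iff hQ u).trans (h M u).symm⟩

/-- Gaifman's Locality Theorem: every first-order formula `φ(x̄)` is logically
equivalent to a Boolean combination of basic local sentences and local formulas with free
variables among `x̄`.  Here `d r` is the formula `δ_{≤r}`. -/
theorem statement_6 {L : FirstOrder.Language} [L.IsRelational] [Finite L.Symbols]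
    (k : ℕ) (d : ℕ → L.Formula (Fin 2)) (hd : ∀ r, IsDistFormula.{w} L r (d r))
    (φ : L.Formula (Fin k)) :
    ∃ φ' : L.Formula (Fin k),
      BoolComb {χ | (∃ (r kk : ℕ) (ψ : L.Formula (Fin 1)),
          RLocal.{w} L r ψ ∧ χ = basicLocalSentence d r kk ψ k) ∨
          (∃ r : ℕ, RLocal.{w} L r χ)} φ' ∧
      ∀ (M : Type w) [L.Structure M] (u : Fin k → M), φ.Realize u ↔ φ'.Realize u :=
  statement_6_general k d hd φ
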